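/- Let A be a commutative semiring and ⋀ the exterior semialgebra over A. For every r ≥ 1 and every partition λ = (λ_1 ≥ ⋯ ≥ λ_r) with at most r parts, writing λ + (1^r) = (λ_1+1, …, λ_r+1): x^0 ∧ [x]^r_{λ+(1^r)} ⪯ w^{−r} · (σ̄_+(w)(σ_-(w)[x]^r_λ)) ∧ x^0, coefficientwise in the powers of w. -/

import Mathlib

/-!  The exterior semialgebra over a commutative semiring `A`, following
Chapman–Gatto–Rowen.  It is the free `A`-module on the basis consisting of a
unit symbol `1` (here `none`) together with all pairs `(ε, s)` where
`ε ∈ {+1, −1}` (here a `Bool`, `true = +1`) and `s` is a strictly decreasing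
nonempty tuple of natural numbers (here a nonempty `Finset ℕ`, read in
decreasing order).  -/

namespace ExtSemi

/-- The basis: `none` is the unit `1`; `some (ε, s)` is the sign `ε` times the
strictly decreasing wedge monomial on the nonempty finite set `s`. -/
abbrev XB : Type := Option (Bool × {s : Finset ℕ // s.Nonempty})

variable (A : Type*) [CommSemiring A]

/-- The exterior semialgebra `⋀`: the free `A`-module on `XB`. -/
abbrev Ext : Type _ := XB →₀ A

/-- Sign flip on the basis; the unit is fixed. -/
def negB : XB → XB
  | none => none
  | some (ε, s) => some (!ε, s)

/-- The negation map `(−)` on `⋀`: the `A`-linear map sending `(ε, s)` to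
`(−ε, s)` and fixing `1`. -/
noncomputable def neg : Ext A →ₗ[A] Ext A := Finsupp.lmapDomain A A negB

/-- The signed basis element attached to a sign and a finite set; the empty set
gives the unit (on which the negation acts trivially). -/
noncomputable def bElem (ε : Bool) (t : Finset ℕ) : Ext A :=
  if h : t.Nonempty then Finsupp.single (some (ε, ⟨t, h⟩)) 1 else Finsupp.single none 1

/-- The unit `1` of `⋀`. -/
noncomputable def one : Ext A := Finsupp.single (none : XB) 1

/-- The generator `x^i`. -/
noncomputable def xg (i : ℕ) : Ext A := bElem A true {i}

/-- `true` iff merging the decreasing enumerations of the disjoint sets `s`, `t`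
(concatenated as `s ++ t`) into a single decreasing enumeration is an even
permutation, i.e. iff the number of pairs `(a ∈ s, b ∈ t)` with `a < b` is even. -/
def mergeEven (s t : Finset ℕ) : Bool :=
  decide ((∑ a ∈ s, (t.filter (fun b => a < b)).card) % 2 = 0)

/-- Wedge product of two basis elements: concatenate the tuples and multiply the
signs (`0` if the tuples share an entry). -/
noncomputable def wB : XB → XB → Ext A
  | none, c => Finsupp.single c 1
  | some b, none => Finsupp.single (some b) 1
  | some (ε, s), some (δ, t) =>
      if s.1 ∩ t.1 = ∅ then bElem A ((ε == δ) == mergeEven s.1 t.1) (s.1 ∪ t.1) else 0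

/-- The wedge product on `⋀`, extended `A`-bilinearly from the basis. -/
noncomputable def wedge (u v : Ext A) : Ext A :=
  u.sum fun b a => v.sum fun c a' => (a * a') • wB A b c

/-- Extend a map defined on the basis `A`-linearly to all of `⋀`. -/
noncomputable def ext1 (g : XB → Ext A) (u : Ext A) : Ext A := u.sum fun b a => a • g b

/-- Quasi-zeros: elements of the form `w + (−)w`. -/
def IsQuasiZero (q : Ext A) : Prop := ∃ w : Ext A, q = w + neg A w

/-- The surpassing relation: `u ⪯ v` iff `v = u + q` for some quasi-zero `q`. -/
def Prec (u v : Ext A) : Prop := ∃ q : Ext A, IsQuasiZero A q ∧ v = u + q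

/-- Twist an element by a sign. -/
noncomputable def twist (ε : Bool) (u : Ext A) : Ext A := if ε then u else neg A u

/-- `k`-fold application of the negation map. -/
noncomputable def negpow (k : ℕ) (u : Ext A) : Ext A := if k % 2 = 0 then u else neg A u

/-- Wedge product of a list of elements of `⋀`. -/
noncomputable def wedgeL (l : List (Ext A)) : Ext A := l.foldr (wedge A) (one A)

/-- The wedge monomial `x^{j_1} ∧ ⋯ ∧ x^{j_r}` for an arbitrary tuple. -/
noncomputable def wedgeMon (l : List ℕ) : Ext A := wedgeL A (l.map (xg A))

/-- The decreasing enumeration of a finite set of naturals. -/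
def descList (s : Finset ℕ) : List ℕ := (s.sort (· ≤ ·)).reverse

/-- The contraction `∂^j ⌟` on basis elements:
`∂^j ⌟ (x^{i_1} ∧ ⋯ ∧ x^{i_r}) = Σ_k (−)^{k−1}[i_k = j]·x^{i_1} ∧ ⋯ ∧ x^{i_{k-1}} ∧ x^{i_{k+1}} ∧ ⋯ ∧ x^{i_r}`,
`∂^j ⌟ 1 = 0`; it commutes with the negation map. -/
noncomputable def contraB (j : ℕ) : XB → Ext A
  | none => 0
  | some (ε, s) =>
      if j ∈ s.1 then
        twist A ε (negpow A ((s.1.filter (fun b => j < b)).card) (bElem A true (s.1.erase j)))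
      else 0

/-- The contraction `∂^j ⌟` on `⋀`, extended `A`-linearly. -/
noncomputable def contra (j : ℕ) (u : Ext A) : Ext A := ext1 A (contraB A j) u

/-- Make an `A`-linear operator on `⋀` commuting with the negation map out of a
coefficient family on decreasing lists (`F k l` = the `k`-th coefficient on the
monomial with decreasing tuple `l`); the unit is sent to itself in degree `0`. -/
noncomputable def hsOn (F : ℕ → List ℕ → Ext A) (k : ℕ) : XB → Ext A
  | none => if k = 0 then one A else 0
  | some (ε, s) => twist A ε (F k (descList s.1))

open Finset.Nat in
/-- Coefficient of `z^k` in `σ₊(z)` on a monomial: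
`σ_k (x^{i_1} ∧ ⋯ ∧ x^{i_r}) = Σ_{k_1+⋯+k_r=k} x^{i_1+k_1} ∧ ⋯ ∧ x^{i_r+k_r}`. -/
noncomputable def sigPlusL (k : ℕ) (l : List ℕ) : Ext A :=
  ∑ c ∈ antidiagonalTuple l.length k,
    wedgeMon A (List.ofFn fun i : Fin l.length => l.get i + c i)

/-- Coefficient of `z^k` in the Schubert derivation `σ₊(z)`. -/
noncomputable def sigPlus (k : ℕ) : Ext A → Ext A := ext1 A (hsOn A (sigPlusL A) k)

open Finset.Nat in
/-- Coefficient of `w^{−k}` in `σ₋(w)`, where `σ₋(w) x^j = Σ_{k=0}^{j} x^{j−k} w^{−k}`. -/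
noncomputable def sigMinusL (k : ℕ) (l : List ℕ) : Ext A :=
  ∑ c ∈ antidiagonalTuple l.length k,
    if ∀ i, c i ≤ l.get i then
      wedgeMon A (List.ofFn fun i : Fin l.length => l.get i - c i)
    else 0

/-- Coefficient of `w^{−k}` in the Schubert derivation `σ₋(w)`. -/
noncomputable def sigMinus (k : ℕ) : Ext A → Ext A := ext1 A (hsOn A (sigMinusL A) k)

open Finset.Nat in
/-- Coefficient of `z^{−k}` in `σ̄₋(z)`, where `σ̄₋(z) x^j = x^j + ((−)x^{j−1}) z^{−1}`
(`x^{−1} := 0`). -/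
noncomputable def sbarMinusL (k : ℕ) (l : List ℕ) : Ext A :=
  negpow A k (∑ c ∈ antidiagonalTuple l.length k,
    if ∀ i, c i ≤ 1 ∧ c i ≤ l.get i then
      wedgeMon A (List.ofFn fun i : Fin l.length => l.get i - c i)
    else 0)

/-- Coefficient of `z^{−k}` in the Schubert derivation `σ̄₋(z)`. -/
noncomputable def sbarMinus (k : ℕ) : Ext A → Ext A := ext1 A (hsOn A (sbarMinusL A) k)

open Finset.Nat in
/-- Coefficient of `w^k` in `σ̄₊(w)`, where `σ̄₊(w) x^j = x^j + ((−)x^{j+1}) w`. -/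
noncomputable def sbarPlusL (k : ℕ) (l : List ℕ) : Ext A :=
  negpow A k (∑ c ∈ antidiagonalTuple l.length k,
    if ∀ i, c i ≤ 1 then
      wedgeMon A (List.ofFn fun i : Fin l.length => l.get i + c i)
    else 0)

/-- Coefficient of `w^k` in the Schubert derivation `σ̄₊(w)`. -/
noncomputable def sbarPlus (k : ℕ) : Ext A → Ext A := ext1 A (hsOn A (sbarPlusL A) k)

/-- The basis element `[x]^r_λ = x^{r−1+λ_1} ∧ x^{r−2+λ_2} ∧ ⋯ ∧ x^{λ_r}`
attached to a partition `λ` with at most `r` parts. -/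
noncomputable def xlam (r : ℕ) (lam : Fin r → ℕ) : Ext A :=
  wedgeMon A (List.ofFn fun i : Fin r => (r - 1 - (i : ℕ)) + lam i)

end ExtSemi

namespace ExtSemi
abbrev Lam : Type := ExteriorAlgebra ℤ (ℕ →₀ ℤ)

noncomputable def ee (i : ℕ) : Lam := ExteriorAlgebra.ι ℤ (Finsupp.single i (1:ℤ))

noncomputable def mon (l : List ℕ) : Lam := (l.map ee).prod

lemma ee_sq (i : ℕ) : ee i * ee i = 0 := ExteriorAlgebra.ι_sq_zero _

lemma ee_anti (i j : ℕ) : ee i * ee j = -(ee j * ee i) := by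
  have := ExteriorAlgebra.ι_add_mul_swap (R := ℤ) (Finsupp.single i (1:ℤ)) (Finsupp.single j (1:ℤ))
  exact eq_neg_of_add_eq_zero_left this

lemma mon_nil : mon [] = 1 := rfl
lemma mon_cons (i : ℕ) (l : List ℕ) : mon (i :: l) = ee i * mon l := by simp [mon]

lemma mon_perm {l l' : List ℕ} (h : l.Perm l') : ∃ u : ℤˣ, mon l = (u : ℤ) • mon l' := by
  induction h with
  | nil => exact ⟨1, by simp⟩
  | cons x _ ih =>
    obtain ⟨u, hu⟩ := ih
    exact ⟨u, by rw [mon_cons, mon_cons, hu, mul_smul_comm]⟩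
  | swap x y l =>
    refine ⟨-1, ?_⟩
    simp only [mon_cons]
    rw [← mul_assoc, ee_anti y x]
    simp [mul_assoc]
  | trans _ _ ih1 ih2 =>
    obtain ⟨u, hu⟩ := ih1
    obtain ⟨v, hv⟩ := ih2
    exact ⟨u * v, by rw [hu, hv, smul_smul]; simp⟩

lemma descList_toFinset (s : Finset ℕ) : (descList s).toFinset = s := by
  ext; simp [descList]

lemma descList_nodup (s : Finset ℕ) : (descList s).Nodup := by
  simp [descList]

lemma descList_pairwise (s : Finset ℕ) : (descList s).Pairwise (· > ·) := by
  unfold descList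
  rw [List.pairwise_reverse]
  exact (Finset.sortedLT_sort s).pairwise

lemma descList_eq {l : List ℕ} (h : l.Pairwise (· > ·)) : descList l.toFinset = l := by
  have hn : l.Nodup := h.imp (fun h => ne_of_gt h)
  refine List.Perm.eq_of_pairwise (le := (· > ·)) ?_ (descList_pairwise _) h ?_
  · intro a b _ _ h1 h2; omega
  · refine (List.perm_ext_iff_of_nodup (descList_nodup _) hn).2 ?_
    intro a; simp [descList]

lemma descList_insert {s : Finset ℕ} {a : ℕ} (h : ∀ x ∈ s, x < a) :
    descList (insert a s) = a :: descList s := by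
  have : (a :: descList s).Pairwise (· > ·) := by
    rw [List.pairwise_cons]
    refine ⟨fun x hx => h x ?_, descList_pairwise s⟩
    simpa [descList] using hx
  rw [← descList_eq this]
  simp [descList_toFinset]

noncomputable def monS (s : Finset ℕ) : Lam := mon (descList s)

lemma monS_empty : monS ∅ = 1 := by simp [monS, descList, mon]

lemma monS_insert {s : Finset ℕ} {a : ℕ} (h : ∀ x ∈ s, x < a) :
    monS (insert a s) = ee a * monS s := by
  rw [monS, descList_insert h, mon_cons, monS]

noncomputable def bas : Module.Basis ℕ ℤ (ℕ →₀ ℤ) := Finsupp.basisSingleOne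

lemma bas_eq (s : Finset ℕ) : ∃ u : ℤˣ, monS s = (u : ℤ) • bas.ExteriorAlgebra s := by
  have : ∃ l : List ℕ, l.Nodup ∧ l.toFinset = s ∧ bas.ExteriorAlgebra s = mon l := by
    let S : Set.powersetCard ℕ s.card := Set.powersetCard.ofCard rfl
    refine ⟨List.ofFn fun i => Set.powersetCard.ofFinEmbEquiv.symm S i, ?_, ?_, ?_⟩
    · rw [List.nodup_ofFn]
      exact (Set.powersetCard.ofFinEmbEquiv.symm S).injective
    · ext a
      have := Set.powersetCard.mem_range_ofFinEmbEquiv_symm_iff_mem S a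
      rw [List.mem_toFinset, List.mem_ofFn]
      exact this
    · rw [ExteriorAlgebra.basis_apply_ofCard bas (rfl : s.card = s.card), mon, List.map_ofFn]
      show (List.ofFn fun i => ExteriorAlgebra.ι ℤ (bas _)).prod = _
      congr 2
  obtain ⟨l, h1, h2, h3⟩ := this
  rw [h3]
  apply mon_perm
  refine (List.perm_ext_iff_of_nodup (descList_nodup _) h1).2 ?_
  intro a; rw [← h2]; simp [descList]

lemma ee_mul_monS {i : ℕ} {s : Finset ℕ} (hi : i ∉ s) :
    ee i * monS s = (-1) ^ (s.filter (fun b => i < b)).card * monS (insert i s) := by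
  induction s using Finset.induction_on_max with
  | empty => rw [monS_insert (by simp)]; simp
  | insert a s ha ih =>
    have has : a ∉ s := fun h => lt_irrefl _ (ha a h)
    simp only [Finset.mem_insert, not_or] at hi
    rcases lt_or_gt_of_ne hi.1 with h | h
    · rw [monS_insert ha, ← mul_assoc, ee_anti, Finset.insert_comm, monS_insert (a := a),
        Finset.filter_insert, if_pos h, Finset.card_insert_of_notMem (by simp [has]), neg_mul,
        mul_assoc, ih hi.2]
      · rw [pow_succ]
        simp only [← mul_assoc]
        rw [((Commute.neg_one_right (ee a)).pow_right _).eq]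
        simp
      · intro x hx
        rcases Finset.mem_insert.1 hx with rfl | hx
        · exact h
        · exact ha x hx
    · rw [monS_insert (a := i)]
      · rw [Finset.filter_eq_empty_iff.2]
        · simp
        · intro x hx
          rcases Finset.mem_insert.1 hx with rfl | hx
          · omega
          · have := ha x hx; omega
      · intro x hx
        rcases Finset.mem_insert.1 hx with rfl | hx
        · exact h
        · have := ha x hx; omega

lemma ee_mul_monS_mem {i : ℕ} {s : Finset ℕ} (hi : i ∈ s) : ee i * monS s = 0 := by
  have h := ee_mul_monS (Finset.notMem_erase i s)
  rw [Finset.insert_erase hi] at h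
  have h2 : monS s = (-1) ^ ((s.erase i).filter (fun b => i < b)).card * (ee i * monS (s.erase i)) := by
    rw [h, ← mul_assoc, ← pow_add, ← two_mul, pow_mul]; simp
  rw [h2, ← mul_assoc, ((Commute.neg_one_right (ee i)).pow_right _).eq, mul_assoc, ← mul_assoc (ee i),
    ee_sq]
  simp

lemma monS_mul_zero (s : Finset ℕ) :
    monS s * ee 0 = if 0 ∈ s then 0 else monS (insert 0 s) := by
  induction s using Finset.induction_on_max with
  | empty => rw [monS_insert (by simp)]; simp [monS_empty]
  | insert a s ha ih =>
    rw [monS_insert ha, mul_assoc, ih]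
    by_cases h0 : 0 ∈ s
    · simp [h0]
    · rcases Nat.eq_zero_or_pos a with rfl | hp
      · have : s = ∅ := by
          apply Finset.eq_empty_of_forall_notMem
          intro x hx; have := ha x hx; omega
        subst this
        rw [monS_insert (by simp)]
        simp [monS_empty, ee_sq]
      · have : ¬ (0 ∈ insert a s) := by simp [h0]; omega
        rw [if_neg h0, if_neg this, Finset.insert_comm, monS_insert (a := a)]
        intro x hx
        rcases Finset.mem_insert.1 hx with rfl | hx
        · exact hp
        · exact ha x hx

section general
variable (A : Type*) [CommSemiring A]

lemma wedge_add_left (u u' v : Ext A) : wedge A (u + u') v = wedge A u v + wedge A u' v := by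
  unfold wedge
  rw [Finsupp.sum_add_index']
  · intro b; simp
  · intro b a a'
    simp only [add_mul, add_smul, Finsupp.sum_add]

lemma wedge_add_right (u v v' : Ext A) : wedge A u (v + v') = wedge A u v + wedge A u v' := by
  unfold wedge
  rw [← Finsupp.sum_add]
  congr 1
  funext b a
  rw [Finsupp.sum_add_index']
  · intro b; simp
  · intro b a a'
    simp only [mul_add, add_smul]

lemma wedge_zero_left (v : Ext A) : wedge A 0 v = 0 := by simp [wedge]
lemma wedge_zero_right (v : Ext A) : wedge A v 0 = 0 := by simp [wedge]

lemma wedge_single (b c : XB) (a a' : A) :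
    wedge A (Finsupp.single b a) (Finsupp.single c a') = (a * a') • wB A b c := by
  unfold wedge
  rw [Finsupp.sum_single_index (by simp), Finsupp.sum_single_index (by simp)]

lemma ext1_add (g : XB → Ext A) (u v : Ext A) : ext1 A g (u + v) = ext1 A g u + ext1 A g v := by
  unfold ext1
  rw [Finsupp.sum_add_index']
  · intro b; simp
  · intro b a a'; simp only [add_smul]

lemma ext1_zero (g : XB → Ext A) : ext1 A g 0 = 0 := by simp [ext1]

lemma ext1_single (g : XB → Ext A) (b : XB) (a : A) :
    ext1 A g (Finsupp.single b a) = a • g b := by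
  unfold ext1
  rw [Finsupp.sum_single_index (by simp)]

noncomputable def kap : Ext ℕ →+ Ext A := Finsupp.mapRange.addMonoidHom (Nat.castAddMonoidHom A)

lemma kap_single (b : XB) (n : ℕ) : kap A (Finsupp.single b n) = Finsupp.single b (n : A) := by
  simp [kap]

lemma kap_smul (n : ℕ) (u : Ext ℕ) : kap A (n • u) = (n : A) • kap A u := by
  rw [map_nsmul, Nat.cast_smul_eq_nsmul]

lemma kap_bElem (ε : Bool) (t : Finset ℕ) : kap A (bElem ℕ ε t) = bElem A ε t := by
  unfold bElem
  split_ifs <;> simp [kap_single]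

lemma kap_one : kap A (one ℕ) = one A := by simp [one, kap_single]

lemma kap_xg (i : ℕ) : kap A (xg ℕ i) = xg A i := kap_bElem _ _ _

lemma kap_wB (b c : XB) : kap A (wB ℕ b c) = wB A b c := by
  rcases b with _ | ⟨ε, s⟩ <;> rcases c with _ | ⟨δ, t⟩ <;> simp only [wB]
  · simp [kap_single]
  · simp [kap_single]
  · simp [kap_single]
  · split_ifs
    · exact kap_bElem _ _ _
    · simp

lemma kap_wedge (u v : Ext ℕ) : kap A (wedge ℕ u v) = wedge A (kap A u) (kap A v) := by
  induction u using Finsupp.induction_linear with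
  | zero => simp [wedge_zero_left]
  | add f g hf hg => simp [wedge_add_left, hf, hg]
  | single b n =>
    induction v using Finsupp.induction_linear with
    | zero => simp [wedge_zero_right]
    | add f g hf hg => simp [wedge_add_right, hf, hg]
    | single c m =>
      simp only [kap_single, wedge_single]
      rw [kap_smul, kap_wB]; simp

lemma kap_neg (u : Ext ℕ) : kap A (neg ℕ u) = neg A (kap A u) := by
  induction u using Finsupp.induction_linear with
  | zero => simp
  | add f g hf hg => simp [hf, hg]
  | single b n => simp [neg, kap_single, Finsupp.mapDomain_single]

lemma kap_wedgeMon (l : List ℕ) : kap A (wedgeMon ℕ l) = wedgeMon A l := by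
  induction l with
  | nil => simp [wedgeMon, wedgeL, kap_one]
  | cons i l ih =>
    simp only [wedgeMon, wedgeL, List.map_cons, List.foldr_cons] at ih ⊢
    rw [kap_wedge, ih, kap_xg]

lemma kap_twist (ε : Bool) (u : Ext ℕ) : kap A (twist ℕ ε u) = twist A ε (kap A u) := by
  unfold twist; split_ifs <;> simp [kap_neg]

lemma kap_negpow (k : ℕ) (u : Ext ℕ) : kap A (negpow ℕ k u) = negpow A k (kap A u) := by
  unfold negpow; split_ifs <;> simp [kap_neg]

lemma kap_ext1 (g : XB → Ext ℕ) (g' : XB → Ext A) (h : ∀ b, kap A (g b) = g' b) (u : Ext ℕ) :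
    kap A (ext1 ℕ g u) = ext1 A g' (kap A u) := by
  induction u using Finsupp.induction_linear with
  | zero => simp [ext1_zero]
  | add f g hf hg => simp [ext1_add, hf, hg]
  | single b n => rw [kap_single, ext1_single, ext1_single, kap_smul, h]

lemma kap_hsOn (F : ℕ → List ℕ → Ext ℕ) (F' : ℕ → List ℕ → Ext A)
    (h : ∀ k l, kap A (F k l) = F' k l) (k : ℕ) (b : XB) :
    kap A (hsOn ℕ F k b) = hsOn A F' k b := by
  rcases b with _ | ⟨ε, s⟩ <;> simp only [hsOn]
  · split_ifs <;> simp [kap_one]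
  · rw [kap_twist, h]

lemma kap_sigMinus (k : ℕ) (u : Ext ℕ) : kap A (sigMinus ℕ k u) = sigMinus A k (kap A u) := by
  unfold sigMinus
  apply kap_ext1
  apply kap_hsOn
  intro k l
  unfold sigMinusL
  rw [map_sum]
  refine Finset.sum_congr rfl fun c _ => ?_
  split_ifs <;> simp [kap_wedgeMon]

lemma kap_sbarPlus (k : ℕ) (u : Ext ℕ) : kap A (sbarPlus ℕ k u) = sbarPlus A k (kap A u) := by
  unfold sbarPlus
  apply kap_ext1
  apply kap_hsOn
  intro k l
  unfold sbarPlusL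
  rw [kap_negpow, map_sum]
  congr 1
  refine Finset.sum_congr rfl fun c _ => ?_
  split_ifs <;> simp [kap_wedgeMon]

lemma kap_prec (u v : Ext ℕ) (h : Prec ℕ u v) : Prec A (kap A u) (kap A v) := by
  obtain ⟨q, ⟨w, rfl⟩, rfl⟩ := h
  exact ⟨_, ⟨kap A w, rfl⟩, by simp [kap_neg]⟩

end general

lemma negB_inj : Function.Injective negB := by
  apply Function.LeftInverse.injective (g := negB)
  rintro (_ | ⟨ε, s⟩) <;> simp [negB]

lemma prec_of (u v : Ext ℕ) (h0 : v none = u none)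
    (h1 : ∀ s, (v (some (true, s)) : ℤ) - v (some (false, s)) =
      (u (some (true, s)) : ℤ) - u (some (false, s)))
    (h2 : ∀ s, u (some (true, s)) = 0 ∨ u (some (false, s)) = 0) : Prec ℕ u v := by
  classical
  let w : Ext ℕ := Finsupp.filter (fun b => ∃ s, b = some (true, s)) (v - u)
  refine ⟨_, ⟨w, rfl⟩, ?_⟩
  have hn : ∀ b, neg ℕ w (negB b) = w b := fun b => Finsupp.mapDomain_apply negB_inj _ _
  have hw0 : w none = 0 := Finsupp.filter_apply_neg _ _ (by simp)
  have hwf : ∀ s, w (some (false, s)) = 0 := fun s => Finsupp.filter_apply_neg _ _ (by simp)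
  have hwt : ∀ s, w (some (true, s)) = v (some (true, s)) - u (some (true, s)) := fun s => by
    rw [Finsupp.filter_apply_pos _ _ ⟨s, rfl⟩]; rfl
  ext b
  simp only [Finsupp.add_apply]
  rcases b with _ | ⟨ε, s⟩
  · have := hn none
    rw [show negB none = none from rfl] at this
    omega
  · have a := hn (some (true, s))
    have b := hn (some (false, s))
    simp only [negB, Bool.not_true, Bool.not_false] at a b
    have := hwf s
    have := hwt s
    have := h1 s
    have := h2 s
    cases ε <;> omega

noncomputable def sg (ε : Bool) : ℤ := if ε then 1 else -1

noncomputable def piB : XB → Lam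
  | none => 1
  | some (ε, s) => sg ε • monS s.1

noncomputable def pp : Ext ℕ →ₗ[ℕ] Lam := Finsupp.linearCombination ℕ piB

lemma pp_single (b : XB) (n : ℕ) : pp (Finsupp.single b n) = n • piB b := by simp [pp]

lemma coord_monS (s t : Finset ℕ) : ∃ u : ℤˣ,
    bas.ExteriorAlgebra.repr (monS t) s = if s = t then (u : ℤ) else 0 := by
  obtain ⟨u, hu⟩ := bas_eq t
  refine ⟨u, ?_⟩
  rw [hu, map_smul, Module.Basis.repr_self, Finsupp.smul_apply, Finsupp.single_apply]
  by_cases h : s = t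
  · simp [h]
  · rw [if_neg h, if_neg (fun h' => h h'.symm), smul_zero]

lemma repr_pp (s : {s : Finset ℕ // s.Nonempty}) : ∃ c : ℤˣ, ∀ u : Ext ℕ,
    bas.ExteriorAlgebra.repr (pp u) s.1 =
      c * ((u (some (true, s)) : ℤ) - u (some (false, s))) := by
  obtain ⟨c, hc⟩ := coord_monS s.1 s.1
  refine ⟨c, fun u => ?_⟩
  induction u using Finsupp.induction_linear with
  | zero => simp
  | add f g hf hg => rw [map_add, map_add, Finsupp.add_apply, hf, hg]; simp; ring
  | single b n =>
    rw [pp_single, map_nsmul]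
    rcases b with _ | ⟨ε, t⟩
    · simp only [piB, ← monS_empty]
      obtain ⟨d, hd⟩ := coord_monS s.1 ∅
      rw [Finsupp.smul_apply, hd, if_neg s.2.ne_empty]
      simp
    · simp only [piB]
      rw [map_smul, Finsupp.smul_apply, Finsupp.smul_apply]
      by_cases h : t = s
      · subst h
        rw [hc]
        cases ε <;> simp [sg, mul_comm]
      · obtain ⟨d, hd⟩ := coord_monS s.1 t.1
        rw [hd, if_neg (fun h' => h (Subtype.ext h'.symm))]
        simp [h]

lemma repr_pp_none (u : Ext ℕ) :
    ∃ c : ℤˣ, bas.ExteriorAlgebra.repr (pp u) ∅ = c * (u none : ℤ) := by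
  obtain ⟨c, hc⟩ := coord_monS ∅ ∅
  refine ⟨c, ?_⟩
  induction u using Finsupp.induction_linear with
  | zero => simp
  | add f g hf hg => rw [map_add, map_add, Finsupp.add_apply, hf, hg]; simp; ring
  | single b n =>
    rw [pp_single, map_nsmul]
    rcases b with _ | ⟨ε, t⟩
    · simp only [piB, ← monS_empty]
      rw [Finsupp.smul_apply, hc]
      simp [mul_comm]
    · simp only [piB]
      rw [map_smul, Finsupp.smul_apply, Finsupp.smul_apply]
      obtain ⟨d, hd⟩ := coord_monS ∅ t.1
      rw [hd, if_neg (fun h' => t.2.ne_empty h'.symm)]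
      simp

lemma repr_pp_none_zero (u v : Ext ℕ) (h : pp u = pp v) (hu : u none = 0) : v none = 0 := by
  obtain ⟨c, hc⟩ := repr_pp_none u
  obtain ⟨d, hd⟩ := repr_pp_none v
  rw [h, hd, hu] at hc
  simpa using hc

lemma prec_of_pp (u v : Ext ℕ) (h : pp u = pp v) (hu : u none = 0)
    (h2 : ∀ s, u (some (true, s)) = 0 ∨ u (some (false, s)) = 0) : Prec ℕ u v := by
  refine prec_of u v ?_ ?_ h2
  · rw [hu, repr_pp_none_zero u v h hu]
  · intro s
    obtain ⟨c, hc⟩ := repr_pp s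
    have := hc u
    rw [h, hc v] at this
    exact mul_left_cancel₀ (Units.ne_zero c) this

lemma pp_neg_nonunit (ε : Bool) (s) (n : ℕ) :
    pp (neg ℕ (Finsupp.single (some (ε, s)) n)) = - pp (Finsupp.single (some (ε, s)) n) := by
  simp only [neg, Finsupp.lmapDomain_apply, Finsupp.mapDomain_single, pp_single, negB, piB]
  cases ε <;> simp [sg]

lemma pp_bElem (ε : Bool) (t : Finset ℕ) (ht : t.Nonempty) : pp (bElem ℕ ε t) = sg ε • monS t := by
  rw [bElem, dif_pos ht, pp_single]; simp [piB]

lemma pp_xg (i : ℕ) : pp (xg ℕ i) = ee i := by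
  rw [xg, pp_bElem _ _ (by simp), ← insert_empty_eq, monS_insert (by simp)]
  simp [sg, monS_empty]

lemma pp_wB_left (i : ℕ) (b : XB) : pp (wB ℕ (some (true, ⟨{i}, by simp⟩)) b) = ee i * piB b := by
  rcases b with _ | ⟨ε, s⟩
  · have := pp_xg i
    rw [xg, bElem, dif_pos (by simp)] at this
    simpa [wB, piB] using this
  · simp only [wB, piB]
    split_ifs with h
    · have hi : i ∉ s.1 := by
        intro h'; have : i ∈ ({i} ∩ s.1 : Finset ℕ) := by simp [h']
        rw [h] at this; simp at this
      rw [pp_bElem _ _ (by simp), mul_smul_comm, ee_mul_monS hi, mergeEven, Finset.sum_singleton,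
        ← Finset.insert_eq]
      rcases Nat.even_or_odd (s.1.filter (fun b => i < b)).card with hh | hh
      · rw [hh.neg_one_pow, Nat.even_iff.1 hh]
        cases ε <;> simp [sg]
      · rw [hh.neg_one_pow, Nat.odd_iff.1 hh]
        cases ε <;> simp [sg]
    · have hi : i ∈ s.1 := by
        by_contra h'
        exact h (Finset.singleton_inter_of_notMem h')
      rw [mul_smul_comm, ee_mul_monS_mem hi, smul_zero, map_zero]

lemma pp_wB_right (b : XB) : pp (wB ℕ b (some (true, ⟨{0}, by simp⟩))) = piB b * ee 0 := by
  rcases b with _ | ⟨ε, s⟩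
  · have := pp_xg 0
    rw [xg, bElem, dif_pos (by simp)] at this
    simpa [wB, piB] using this
  · simp only [wB, piB]
    rw [smul_mul_assoc, monS_mul_zero]
    by_cases h0 : 0 ∈ s.1
    · simp [h0]
    · rw [if_pos (Finset.inter_singleton_of_notMem h0), if_neg h0, pp_bElem _ _ (by simp), Finset.union_comm, ← Finset.insert_eq]
      have hm : mergeEven s.1 {0} = true := by
        unfold mergeEven
        rw [Finset.sum_eq_zero]
        · simp
        · intro x _
          rw [Finset.card_eq_zero, Finset.filter_eq_empty_iff]
          intro y hy
          have := Finset.mem_singleton.1 hy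
          omega
      rw [hm]
      cases ε <;> rfl

lemma xg_eq (i : ℕ) : xg ℕ i = Finsupp.single (some (true, ⟨{i}, by simp⟩)) 1 := by
  rw [xg, bElem, dif_pos (by simp)]

lemma pp_wedge_left (i : ℕ) (u : Ext ℕ) : pp (wedge ℕ (xg ℕ i) u) = ee i * pp u := by
  rw [xg_eq]
  induction u using Finsupp.induction_linear with
  | zero => simp [wedge_zero_right]
  | add f g hf hg => simp [wedge_add_right, hf, hg, mul_add]
  | single b n =>
    rw [wedge_single, map_smul, pp_single, one_mul, pp_wB_left, mul_smul_comm]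

lemma pp_wedge_right (u : Ext ℕ) : pp (wedge ℕ u (xg ℕ 0)) = pp u * ee 0 := by
  rw [xg_eq]
  induction u using Finsupp.induction_linear with
  | zero => simp [wedge_zero_left]
  | add f g hf hg => simp [wedge_add_left, hf, hg, add_mul]
  | single b n =>
    rw [wedge_single, map_smul, pp_single, mul_one, pp_wB_right, smul_mul_assoc]

lemma wedgeMon_cons (i : ℕ) (l : List ℕ) :
    wedgeMon ℕ (i :: l) = wedge ℕ (xg ℕ i) (wedgeMon ℕ l) := rfl

lemma pp_wedgeMon (l : List ℕ) : pp (wedgeMon ℕ l) = mon l := by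
  induction l with
  | nil => simp [wedgeMon, wedgeL, one, pp_single, piB, mon_nil]
  | cons i l ih => rw [wedgeMon_cons, pp_wedge_left, ih, mon_cons]

lemma wedge_xg_bElem (i : ℕ) (ε : Bool) (t : Finset ℕ) :
    wedge ℕ (xg ℕ i) (bElem ℕ ε t) = 0 ∨
      ∃ δ, wedge ℕ (xg ℕ i) (bElem ℕ ε t) = bElem ℕ δ (insert i t) := by
  rw [xg_eq]
  by_cases ht : t.Nonempty
  · have : bElem ℕ ε t = Finsupp.single (some (ε, ⟨t, ht⟩)) 1 := by rw [bElem, dif_pos ht]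
    rw [this, wedge_single]
    simp only [wB, mul_one, one_smul]
    split_ifs with h
    · right
      exact ⟨_, by rw [← Finset.insert_eq]⟩
    · left; rfl
  · rw [Finset.not_nonempty_iff_eq_empty.1 ht]
    right
    refine ⟨true, ?_⟩
    have : bElem ℕ ε ∅ = Finsupp.single none 1 := by simp [bElem]
    rw [this, wedge_single]
    simp [wB, bElem]

lemma wedgeMon_form (i : ℕ) (l : List ℕ) : wedgeMon ℕ (i :: l) = 0 ∨
    ∃ δ s, wedgeMon ℕ (i :: l) = Finsupp.single (some (δ, s)) 1 := by
  suffices H : ∀ l, wedgeMon ℕ l = 0 ∨ ∃ δ, wedgeMon ℕ l = bElem ℕ δ l.toFinset by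
    rcases H (i :: l) with h | ⟨δ, h⟩
    · exact Or.inl h
    · rw [bElem, dif_pos (by simp)] at h
      exact Or.inr ⟨_, _, h⟩
  intro l
  induction l with
  | nil => right; exact ⟨true, by simp [wedgeMon, wedgeL, bElem, one]⟩
  | cons i l ih =>
    rw [wedgeMon_cons]
    rcases ih with h | ⟨δ, h⟩
    · left; rw [h, wedge_zero_right]
    · rw [h]
      rcases wedge_xg_bElem i δ l.toFinset with h | ⟨ε, h⟩
      · exact Or.inl h
      · exact Or.inr ⟨ε, by rw [h]; simp⟩

lemma wedgeMon_desc (l : List ℕ) (h : l.Pairwise (· > ·)) :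
    wedgeMon ℕ l = bElem ℕ true l.toFinset := by
  induction l with
  | nil => simp [wedgeMon, wedgeL, bElem, one]
  | cons i l ih =>
    rw [List.pairwise_cons] at h
    rw [wedgeMon_cons, ih h.2, xg_eq]
    unfold bElem
    by_cases ht : l.toFinset.Nonempty
    · rw [dif_pos ht, wedge_single, dif_pos (by simp)]
      have hi : i ∉ l := fun hi => lt_irrefl _ (h.1 i hi)
      simp only [wB]
      rw [if_pos (Finset.singleton_inter_of_notMem (by simpa using hi)), bElem, dif_pos (by simp)]
      have hm : mergeEven {i} l.toFinset = true := by
        simp only [mergeEven, Finset.sum_singleton]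
        rw [Finset.filter_eq_empty_iff.2]
        · simp
        · intro x hx; have := h.1 x (by simpa using hx); omega
      simp [hm, ← Finset.insert_eq]
    · rw [dif_neg ht, wedge_single, dif_pos (by simp)]
      have : l = [] := by simpa using ht
      subst this
      simp [wB]
open Polynomial in
lemma sum_antidiagonalTuple_succ {R : Type*} [AddCommMonoid R] (n k : ℕ) (F : (Fin (n+1) → ℕ) → R) :
    ∑ c ∈ Finset.Nat.antidiagonalTuple (n+1) k, F c =
      ∑ p ∈ Finset.HasAntidiagonal.antidiagonal k, ∑ c ∈ Finset.Nat.antidiagonalTuple n p.2, F (Fin.cons p.1 c) := by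
  rw [Finset.sum_sigma']
  refine Finset.sum_bij' (fun c _ => (⟨(c 0, ∑ i, Fin.tail c i), Fin.tail c⟩ : (_ : ℕ × ℕ) × (Fin n → ℕ)))
    (fun x _ => Fin.cons x.1.1 x.2) ?_ ?_ ?_ ?_ ?_
  · intro c hc
    rw [Finset.Nat.mem_antidiagonalTuple, Fin.sum_univ_succ] at hc
    simp only [Finset.mem_sigma, Finset.HasAntidiagonal.mem_antidiagonal, Finset.Nat.mem_antidiagonalTuple, and_true]
    exact hc
  · intro x hx
    simp only [Finset.mem_sigma, Finset.HasAntidiagonal.mem_antidiagonal, Finset.Nat.mem_antidiagonalTuple] at hx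
    rw [Finset.Nat.mem_antidiagonalTuple, Fin.sum_univ_succ]
    simp [hx.2]; exact hx.1
  · intro c hc; simp
  · rintro ⟨⟨a, b⟩, x⟩ hx
    simp only [Finset.mem_sigma, Finset.HasAntidiagonal.mem_antidiagonal, Finset.Nat.mem_antidiagonalTuple] at hx
    simp [hx.2]
  · intro c hc; simp

open Polynomial in
lemma coeff_list_prod {R : Type*} [Semiring R] (p : ℕ → R[X]) (l : List ℕ) (k : ℕ) :
    (l.map p).prod.coeff k = ∑ c ∈ Finset.Nat.antidiagonalTuple l.length k,
      (List.ofFn fun i => (p (l.get i)).coeff (c i)).prod := by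
  induction l generalizing k with
  | nil =>
    cases k with
    | zero => simp
    | succ k => simp [coeff_one]
  | cons a l ih =>
    rw [List.map_cons, List.prod_cons, coeff_mul]
    erw [sum_antidiagonalTuple_succ]
    refine Finset.sum_congr rfl fun q _ => ?_
    rw [ih, Finset.mul_sum]
    refine Finset.sum_congr rfl fun c _ => ?_
    rw [List.ofFn_succ, List.prod_cons]
    simp

lemma ofFn_prod_ite {R : Type*} [Semiring R] (n : ℕ) (P : Fin n → Prop) [DecidablePred P]
    (f : Fin n → R) : (List.ofFn fun i => if P i then f i else 0).prod =
      if ∀ i, P i then (List.ofFn f).prod else 0 := by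
  induction n with
  | zero => simp
  | succ n ih =>
    rw [List.ofFn_succ, List.prod_cons, ih, List.ofFn_succ, List.prod_cons]
    by_cases h0 : P 0
    · by_cases h1 : ∀ i : Fin n, P i.succ
      · have : ∀ i, P i := fun i => Fin.cases h0 h1 i
        simp [this]
      · have : ¬ ∀ i, P i := fun h => h1 fun i => h _
        simp [h1, this]
    · have : ¬ ∀ i, P i := fun h => h0 (h _)
      simp [h0, this]

section polys
open Polynomial

noncomputable def pl (j : ℕ) : Lam[X] := C (ee j) + C (ee (j+1)) * X

noncomputable def pm : ℕ → Lam[X]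
  | 0 => C (ee 0)
  | (j+1) => C (ee (j+1)) + X * pm j

lemma coeff_pl (j c : ℕ) : (pl j).coeff c = if c ≤ 1 then ee (j + c) else 0 := by
  unfold pl
  rcases c with _ | _ | c
  · simp
  · simp [coeff_C]
  · simp [coeff_C, coeff_X]

lemma coeff_pm (j c : ℕ) : (pm j).coeff c = if c ≤ j then ee (j - c) else 0 := by
  induction j generalizing c with
  | zero => rcases c with _ | c <;> simp [pm, coeff_C]
  | succ j ih =>
    rcases c with _ | c
    · simp [pm]
    · simp [pm, coeff_C, ih]

lemma pp_neg (u : Ext ℕ) (h : u none = 0) : pp (neg ℕ u) = - pp u := by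
  have key : ∀ u : Ext ℕ, pp (neg ℕ u) + pp u = ((2 * u none : ℕ)) • (1 : Lam) := by
    intro u
    induction u using Finsupp.induction_linear with
    | zero => simp
    | add f g hf hg =>
      rw [map_add, map_add, map_add, add_add_add_comm, hf, hg, Finsupp.add_apply, mul_add, add_smul]
    | single b n =>
      rcases b with _ | ⟨ε, s⟩
      · simp only [neg, Finsupp.lmapDomain_apply, Finsupp.mapDomain_single, negB, pp_single, piB]
        rw [Finsupp.single_eq_same, two_mul, add_smul]
      · rw [pp_neg_nonunit]; simp
  have := key u
  rw [h, mul_zero, zero_smul] at this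
  exact eq_neg_of_add_eq_zero_left this

lemma wedgeMon_none (l : List ℕ) (h : l ≠ []) : wedgeMon ℕ l none = 0 := by
  obtain ⟨i, l, rfl⟩ := List.exists_cons_of_ne_nil h
  rcases wedgeMon_form i l with h | ⟨δ, s, h⟩ <;> simp [h]

lemma neg_none (u : Ext ℕ) (h : u none = 0) : neg ℕ u none = 0 := by
  have : neg ℕ u (negB none) = u none := Finsupp.mapDomain_apply negB_inj _ _
  exact this.trans h

lemma pp_negpow (k : ℕ) (u : Ext ℕ) (h : u none = 0) :
    pp (negpow ℕ k u) = (-1 : ℤ) ^ k • pp u := by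
  unfold negpow
  split_ifs with hk
  · rw [(Nat.even_iff.2 hk).neg_one_pow, one_smul]
  · rw [(Nat.odd_iff.2 (by omega)).neg_one_pow, pp_neg u h, neg_smul, one_smul]

lemma negpow_none (k : ℕ) (u : Ext ℕ) (h : u none = 0) : negpow ℕ k u none = 0 := by
  unfold negpow
  split_ifs with hk
  · exact h
  · exact neg_none u h

lemma pp_twist (ε : Bool) (u : Ext ℕ) (h : u none = 0) :
    pp (twist ℕ ε u) = sg ε • pp u := by
  unfold twist sg
  cases ε <;> simp [pp_neg u h]

lemma pp_sigMinusL (k : ℕ) (l : List ℕ) :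
    pp (sigMinusL ℕ k l) = (l.map pm).prod.coeff k := by
  rw [coeff_list_prod, sigMinusL, map_sum]
  refine Finset.sum_congr rfl fun c _ => ?_
  simp only [coeff_pm]
  rw [ofFn_prod_ite]
  split_ifs with h
  · rw [pp_wedgeMon, mon, List.map_ofFn]; rfl
  · simp

lemma sbar_inner_none (k : ℕ) (l : List ℕ) (hl : l ≠ []) :
    (∑ c ∈ Finset.Nat.antidiagonalTuple l.length k,
      if ∀ i, c i ≤ 1 then
      wedgeMon ℕ (List.ofFn fun i : Fin l.length => l.get i + c i)
      else 0 : Ext ℕ) none = 0 := by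
  rw [Finsupp.finsetSum_apply]
  refine Finset.sum_eq_zero fun c _ => ?_
  split_ifs
  · apply wedgeMon_none
    intro h
    have := congrArg List.length h
    simp at this
    exact hl this
  · rfl

lemma pp_sbarPlusL (k : ℕ) (l : List ℕ) (hl : l ≠ []) :
    pp (sbarPlusL ℕ k l) = (-1 : ℤ) ^ k • (l.map pl).prod.coeff k := by
  rw [coeff_list_prod, sbarPlusL, pp_negpow _ _ (sbar_inner_none k l hl), map_sum]
  congr 1
  refine Finset.sum_congr rfl fun c _ => ?_
  simp only [coeff_pl]
  rw [ofFn_prod_ite]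
  split_ifs with h
  · rw [pp_wedgeMon, mon, List.map_ofFn]; rfl
  · simp

noncomputable def shf : (ℕ →₀ ℤ) →ₗ[ℤ] (ℕ →₀ ℤ) := Finsupp.lmapDomain ℤ ℤ Nat.succ

noncomputable def SL : (ℕ →₀ ℤ) →ₗ[ℤ] Lam[X] :=
  (CAlgHom (R := ℤ) (A := Lam)).toLinearMap ∘ₗ ExteriorAlgebra.ι ℤ +
    (LinearMap.mulRight ℤ (X : Lam[X])) ∘ₗ (CAlgHom (R := ℤ) (A := Lam)).toLinearMap ∘ₗ
      ExteriorAlgebra.ι ℤ ∘ₗ shf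

lemma SL_apply (m) : SL m = C (ExteriorAlgebra.ι ℤ m) + C (ExteriorAlgebra.ι ℤ (shf m)) * X := rfl

lemma SL_sq (m) : SL m * SL m = 0 := by
  rw [SL_apply]
  set a := ExteriorAlgebra.ι ℤ m
  set b := ExteriorAlgebra.ι ℤ (shf m)
  have h1 : a * a = 0 := ExteriorAlgebra.ι_sq_zero _
  have h2 : b * b = 0 := ExteriorAlgebra.ι_sq_zero _
  have h3 : a * b + b * a = 0 := ExteriorAlgebra.ι_add_mul_swap _ _
  have : (C a + C b * X) * (C a + C b * X) =
      C (a * a) + C (a * b + b * a) * X + C (b * b) * X * X := by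
    simp only [C_add, C_mul, mul_add, add_mul]
    have e : C b * X * C a = C b * C a * X := by rw [mul_assoc, X_mul, mul_assoc]
    have e2 : C b * X * (C b * X) = C b * C b * X * X := by
      rw [mul_assoc, ← mul_assoc X, X_mul]; simp only [mul_assoc]
    rw [e, e2]
    simp only [← mul_assoc]
    abel
  rw [this, h1, h2, h3]; simp

noncomputable def SP : Lam →ₐ[ℤ] Lam[X] := ExteriorAlgebra.lift ℤ ⟨SL, SL_sq⟩

lemma SP_ee (i : ℕ) : SP (ee i) = pl i := by
  rw [SP, ee, ExteriorAlgebra.lift_ι_apply]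
  show SL _ = _
  rw [SL_apply, pl]
  simp [ee, shf, Finsupp.mapDomain_single]

lemma SP_mon (l : List ℕ) : SP (mon l) = (l.map pl).prod := by
  rw [mon, map_list_prod, List.map_map]
  congr 2
  funext i
  exact SP_ee i

lemma pp_sbarPlus (k : ℕ) (u : Ext ℕ) :
    pp (sbarPlus ℕ k u) = (-1 : ℤ) ^ k • (SP (pp u)).coeff k := by
  unfold sbarPlus
  induction u using Finsupp.induction_linear with
  | zero => simp [ext1_zero]
  | add f g hf hg => rw [ext1_add, map_add, hf, hg, map_add, map_add, coeff_add, smul_add]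
  | single b n =>
    rw [ext1_single, map_smul, pp_single, map_nsmul, coeff_smul, smul_comm]
    congr 1
    rcases b with _ | ⟨ε, s⟩
    · simp only [hsOn, piB, map_one, coeff_one]
      split_ifs with h
      · subst h; simp [one, pp_single, piB]
      · simp
    · have hl : descList s.1 ≠ [] := by
        intro h
        have := descList_toFinset s.1
        rw [h] at this
        exact s.2.ne_empty this.symm
      simp only [hsOn, piB]
      rw [pp_twist _ (sbarPlusL ℕ k _) (negpow_none _ _ (sbar_inner_none k _ hl)), pp_sbarPlusL _ _ hl, map_smul,
        coeff_smul, monS, SP_mon, smul_comm]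

lemma pp_sigMinus_mon (k : ℕ) (l : List ℕ) (hl : l ≠ []) (h : l.Pairwise (· > ·)) :
    pp (sigMinus ℕ k (wedgeMon ℕ l)) = (l.map pm).prod.coeff k := by
  rw [wedgeMon_desc l h, bElem, dif_pos (by simpa using hl), sigMinus, ext1_single, one_smul, hsOn]
  simp only [twist, if_true]
  rw [descList_eq h, pp_sigMinusL]

lemma natDegree_SP_mon (l : List ℕ) : (SP (mon l)).natDegree ≤ l.length := by
  rw [SP_mon]
  induction l with
  | nil => simp
  | cons a l ih =>
    rw [List.map_cons, List.prod_cons]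
    refine natDegree_mul_le.trans ?_
    have : (pl a).natDegree ≤ 1 := by
      rw [natDegree_le_iff_coeff_eq_zero]
      intro N hN
      rw [coeff_pl, if_neg (by omega)]
    rw [List.length_cons]; omega

lemma SP_coeff_zero (l : List ℕ) (c e : ℕ) (he : l.length < e) :
    (SP ((l.map pm).prod.coeff c)).coeff e = 0 := by
  rw [coeff_list_prod, map_sum, finsetSum_coeff]
  refine Finset.sum_eq_zero fun t _ => ?_
  simp only [coeff_pm]
  rw [ofFn_prod_ite]
  split_ifs
  · have h := natDegree_SP_mon (List.ofFn fun i => l.get i - t i)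
    rw [mon, List.map_ofFn] at h
    refine coeff_eq_zero_of_natDegree_lt (lt_of_le_of_lt h ?_)
    simpa using he
  · simp

end polys

open Polynomial in
noncomputable def Psi : Lam →+* LaurentPolynomial Lam :=
  (eval₂RingHom' LaurentPolynomial.C (-LaurentPolynomial.T 1)
    (fun a => Commute.neg_right
      (LaurentPolynomial.commute_T 1 (LaurentPolynomial.C a : LaurentPolynomial Lam)).symm)).comp (SP : Lam →+* Lam[X])

open Polynomial in
noncomputable def Phi : Lam[X] →+* LaurentPolynomial Lam :=
  eval₂RingHom' Psi (LaurentPolynomial.T (-1)) (fun _ => (LaurentPolynomial.commute_T _ _).symm)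

open LaurentPolynomial in
lemma Psi_apply (x : Lam) (N : ℕ) (h : ∀ e, N ≤ e → (SP x).coeff e = 0) :
    Psi x = ∑ e ∈ Finset.range N, C (((-1 : ℤ) ^ e) • (SP x).coeff e) * T (e : ℤ) := by
  show Polynomial.eval₂ _ _ (SP x) = _
  rw [Polynomial.eval₂_eq_sum, Polynomial.sum_over_range' _ (by simp) (max N ((SP x).natDegree + 1)) (by omega)]
  symm
  refine Finset.sum_subset_zero_on_sdiff (Finset.range_mono (by omega)) ?_ ?_
  · intro e he
    simp only [Finset.mem_sdiff, Finset.mem_range, not_lt] at he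
    rw [h e he.2]; simp
  · intro e he
    rw [neg_pow (T 1 : LaurentPolynomial Lam), T_pow, mul_one, ← mul_assoc]
    congr 1
    rcases Nat.even_or_odd e with hh | hh <;> simp [hh.neg_one_pow]

open LaurentPolynomial in
lemma Psi_ee (j : ℕ) : Psi (ee j) = C (ee j) - C (ee (j+1)) * T 1 := by
  show Polynomial.eval₂ _ _ (SP (ee j)) = _
  rw [SP_ee, pl, Polynomial.eval₂_add, Polynomial.eval₂_C, Polynomial.eval₂_mul_X, Polynomial.eval₂_C]
  simp [sub_eq_add_neg]

open LaurentPolynomial in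
lemma Phi_C (a : Lam) : Phi (Polynomial.C a) = Psi a := Polynomial.eval₂_C _ _

open LaurentPolynomial in
lemma Phi_X : Phi (Polynomial.X) = T (-1) := Polynomial.eval₂_X _ _

open LaurentPolynomial in
lemma Phi_pm (j : ℕ) : Phi (pm j) = C (ee 0) * T (-(j:ℤ)) - C (ee (j+1)) * T 1 := by
  induction j with
  | zero => rw [pm, Phi_C, Psi_ee]; simp
  | succ j ih =>
    rw [pm, map_add, map_mul, Phi_C, Phi_X, Psi_ee, ih, T_mul, sub_mul, mul_T_assoc, mul_T_assoc]
    simp only [add_neg_cancel, T_zero, mul_one]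
    rw [show (-(j:ℤ) + -1) = -((j+1 : ℕ) : ℤ) by push_cast; ring]
    abel

open LaurentPolynomial in
lemma Phi_prod (l : List ℕ) : Phi ((l.map pm).prod) * C (ee 0) =
    C (ee 0 * mon (l.map (· + 1))) * T (l.length : ℤ) := by
  induction l with
  | nil => simp [mon]
  | cons a l ih =>
    rw [List.map_cons, List.prod_cons, map_mul, mul_assoc, ih, Phi_pm, List.map_cons, mon_cons,
      sub_mul]
    have h1 : C (ee 0) * T (-(a:ℤ)) * (C (ee 0 * mon (l.map (· + 1))) * T (l.length : ℤ)) = 0 := by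
      rw [mul_assoc, T_mul, mul_assoc, ← mul_assoc (C _), ← map_mul, ← mul_assoc (ee 0), ee_sq, zero_mul, map_zero, zero_mul]
    rw [h1, zero_sub, mul_assoc, T_mul, mul_T_assoc, ← mul_assoc (C _), ← map_mul,
      ← mul_assoc (ee _), ee_anti, List.length_cons, neg_mul, map_neg, neg_mul, neg_neg, mul_assoc]
    push_cast
    rfl

open LaurentPolynomial in
lemma coeff_Phi (P : Polynomial Lam) (a : Lam) (r : ℕ) (n : ℤ)
    (hP : ∀ c e, r < e → (SP (P.coeff c)).coeff e = 0) :
    (Phi P * C a).coeff n = ∑ e ∈ Finset.range (r+1), if n ≤ (e : ℤ) then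
      ((-1 : ℤ) ^ e • (SP (P.coeff (((e:ℤ) - n).toNat))).coeff e) * a else 0 := by
  let N := max (P.natDegree + 1) ((r : ℤ) - n + 1).toNat
  have h1 : Phi P * C a = ∑ e ∈ Finset.range (r+1), ∑ c ∈ Finset.range N,
      AddMonoidAlgebra.single ((e:ℤ) - c) (((-1 : ℤ) ^ e • (SP (P.coeff c)).coeff e) * a) := by
    rw [Finset.sum_comm]
    have : Phi P = Polynomial.eval₂ Psi (T (-1)) P := rfl
    rw [this, Polynomial.eval₂_eq_sum, Polynomial.sum_over_range' _ (by simp) N (by omega), Finset.sum_mul]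
    refine Finset.sum_congr rfl fun c _ => ?_
    rw [Psi_apply _ (r+1) (fun e he => hP c e he), Finset.sum_mul, Finset.sum_mul]
    refine Finset.sum_congr rfl fun e _ => ?_
    rw [single_eq_C_mul_T, T_pow, mul_T_assoc, mul_assoc, T_mul, ← mul_assoc, ← map_mul]
    congr 2
    ring
  rw [h1]
  simp only [AddMonoidAlgebra.coeff_sum, Finsupp.finsetSum_apply, AddMonoidAlgebra.coeff_single,
    Finsupp.single_apply]
  refine Finset.sum_congr rfl fun e he => ?_
  have he' := Finset.mem_range.1 he
  split_ifs with h
  · rw [Finset.sum_eq_single ((e:ℤ) - n).toNat]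
    · rw [if_pos (by omega)]
    · intro c _ hc
      rw [if_neg (by omega)]
    · intro hc
      exact absurd (Finset.mem_range.2 (by omega)) hc
  · refine Finset.sum_eq_zero fun c _ => ?_
    rw [if_neg (by omega)]

lemma main_nat (r : ℕ) (hr : 1 ≤ r) (lam : Fin r → ℕ) (hlam : Antitone lam) (b : ℤ) :
    Prec ℕ
      (if b = 0 then wedge ℕ (xg ℕ 0) (xlam ℕ r (fun i => lam i + 1)) else 0)
      (∑ e ∈ Finset.range (r + 1),
        if b + (r : ℤ) ≤ (e : ℤ) then
          wedge ℕ
            (sbarPlus ℕ e (sigMinus ℕ (((e : ℤ) - b - (r : ℤ)).toNat) (xlam ℕ r lam)))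
            (xg ℕ 0)
        else 0) := by
  set l : List ℕ := List.ofFn fun i : Fin r => (r - 1 - (i : ℕ)) + lam i with hl
  have hlen : l.length = r := by simp [hl]
  have hne : l ≠ [] := by
    intro h; rw [h] at hlen; simp at hlen; omega
  have hpw : l.Pairwise (· > ·) := by
    rw [hl, List.pairwise_ofFn]
    intro i j hij
    have h1 := hlam hij.le
    have h2 : (i : ℕ) < j := hij
    have h3 := j.2
    omega
  have hl1 : xlam ℕ r (fun i => lam i + 1) = wedgeMon ℕ (l.map (· + 1)) := by
    rw [xlam, hl, List.map_ofFn]; rfl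
  have hl0 : xlam ℕ r lam = wedgeMon ℕ l := rfl
  rw [hl1, hl0]
  have hform : ∀ x : Ext ℕ, (x = 0 ∨ ∃ δ s, x = Finsupp.single (some (δ, s)) 1) →
      x none = 0 ∧ ∀ s, x (some (true, s)) = 0 ∨ x (some (false, s)) = 0 := by
    rintro x (rfl | ⟨δ, s, rfl⟩)
    · simp
    · refine ⟨by simp, fun t => ?_⟩
      cases δ <;> simp [Finsupp.single_apply]
  have hx := hform (if b = 0 then wedge ℕ (xg ℕ 0) (wedgeMon ℕ (l.map (· + 1))) else 0) (by
    split_ifs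
    · exact wedgeMon_form 0 _
    · exact Or.inl rfl)
  refine prec_of_pp _ _ ?_ hx.1 hx.2
  have key := coeff_Phi ((l.map pm).prod) (ee 0) r (b + r)
    (fun c e he => SP_coeff_zero l c e (by omega))
  rw [Phi_prod, ← LaurentPolynomial.single_eq_C_mul_T, AddMonoidAlgebra.coeff_single,
    Finsupp.single_apply, hlen] at key
  have e1 : pp (if b = 0 then wedge ℕ (xg ℕ 0) (wedgeMon ℕ (l.map (· + 1))) else 0) =
      if (r : ℤ) = b + r then ee 0 * mon (l.map (· + 1)) else 0 := by
    by_cases hb : b = 0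
    · rw [if_pos hb, if_pos (by omega), pp_wedge_left, pp_wedgeMon]
    · rw [if_neg hb, if_neg (by omega), map_zero]
  rw [e1, key, map_sum]
  refine Finset.sum_congr rfl fun e _ => ?_
  split_ifs with h
  · rw [pp_wedge_right, pp_sbarPlus, pp_sigMinus_mon _ _ hne hpw, sub_sub]
  · simp


/-- For every `r ≥ 1` and every partition `λ` with at most `r`
parts, writing `λ + (1^r) = (λ_1+1, …, λ_r+1)`:
`x^0 ∧ [x]^r_{λ+(1^r)} ⪯ w^{−r} · (σ̄₊(w)(σ₋(w)[x]^r_λ)) ∧ x^0`,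
coefficientwise in the powers `w^b` (`b ∈ ℤ`).  On the right the coefficient of
`w^b` is the sum over decompositions `−r + e − c = b`, with `σ̄₊` contributing
`w^e` (vanishing for `e > r`) and `σ₋` contributing `w^{−c}`. -/
theorem wedge_x0_surpassed (A : Type*) [CommSemiring A]
    (r : ℕ) (hr : 1 ≤ r) (lam : Fin r → ℕ) (hlam : Antitone lam) (b : ℤ) :
    Prec A
      (if b = 0 then wedge A (xg A 0) (xlam A r (fun i => lam i + 1)) else 0)
      (∑ e ∈ Finset.range (r + 1),
        if b + (r : ℤ) ≤ (e : ℤ) then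
          wedge A
            (sbarPlus A e (sigMinus A (((e : ℤ) - b - (r : ℤ)).toNat) (xlam A r lam)))
            (xg A 0)
        else 0) := by
  have h := kap_prec A _ _ (main_nat r hr lam hlam b)
  have h1 : kap A (if b = 0 then wedge ℕ (xg ℕ 0) (xlam ℕ r (fun i => lam i + 1)) else 0) =
      if b = 0 then wedge A (xg A 0) (xlam A r (fun i => lam i + 1)) else 0 := by
    split_ifs
    · rw [kap_wedge, kap_xg, xlam, kap_wedgeMon, xlam]
    · simp
  rw [h1, map_sum] at h
  convert h using 1
  refine Finset.sum_congr rfl fun e _ => ?_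
  split_ifs
  · rw [kap_wedge, kap_xg, kap_sbarPlus, kap_sigMinus, xlam, xlam, kap_wedgeMon]
  · simp

end ExtSemi
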